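/- Over the ordered alphabet {a<b}, each of the words a^α, b^α, a^α b^β, b^α a^β, a^α b a^β, b^α a b^β, a^α b a b^β, and b^α a b a^β (for α, β ≥ 1), as well as the empty word, is M-unambiguous: no distinct word is M-equivalent to it. -/

import Mathlib

open List

/-- Number of occurrences of `v` as a scattered subsequence of `w`. -/
def scount {α : Type*} [DecidableEq α] (w v : List α) : ℕ := w.sublists.count v

/-- The binary ordered alphabet {a < b}. -/
inductive AB | a | b
deriving DecidableEq

open AB

/-- M-equivalence over the ordered alphabet {a < b}. -/
def MEq2 (w w' : List AB) : Prop :=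
  scount w [a] = scount w' [a] ∧ scount w [b] = scount w' [b] ∧
  scount w [a, b] = scount w' [a, b]

/-- A word over {a < b} is M-unambiguous if the only word M-equivalent to it is itself. -/
def Munamb2 (w : List AB) : Prop := ∀ w' : List AB, MEq2 w' w → w' = w

/-!
For distinct letters `x`, `y`, the identity `|w|_xy + |w|_yx = |w|_x |w|_y` makes M-equivalence
symmetric under exchanging the two letters, so each family of words needs to be treated in one order
only. A word over `{x, y}` with `|w|_xy = 0` has the form `y^m x^n`, one with `|w|_xy = 1` the form
`y^m x y x^n`, and one with `|w|_x = 1` the form `y^m x y^n`. In each case the remaining invariants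
determine `m` and `n`.
-/

theorem eq_replicate_of_subset_pair_of_notMem {α : Type*} {x y : α} {w : List α}
    (hw : w ⊆ [x, y]) (hx : x ∉ w) : w = replicate w.length y :=
  eq_replicate_of_mem fun z hz => by
    rcases mem_pair.mp (hw hz) with rfl | rfl
    · exact absurd hz hx
    · rfl

section Scount

variable {α : Type*} [DecidableEq α] {x y : α} {w : List α}

theorem scount_eq_count_sublists' (w v : List α) : scount w v = w.sublists'.count v :=
  (sublists_perm_sublists' w).count_eq v

theorem scount_eq_zero_iff {v : List α} : scount w v = 0 ↔ ¬ v <+ w := by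
  rw [scount, count_eq_zero, mem_sublists]

theorem scount_nil_right (w : List α) : scount w [] = 1 := by
  induction w with
  | nil => rfl
  | cons x w ih =>
    rw [scount_eq_count_sublists'] at ih ⊢
    simp [sublists'_cons, count_append, ih, count_eq_zero]

theorem scount_cons_cons (x y : α) (w v : List α) :
    scount (x :: w) (y :: v) = scount w (y :: v) + if x = y then scount w v else 0 := by
  simp only [scount_eq_count_sublists', sublists'_cons, count_append]
  congr 1
  split_ifs with h
  · subst h
    exact count_map_of_injective _ _ cons_injective _
  · simp [count_eq_zero, h]

theorem scount_singleton (w : List α) (x : α) : scount w [x] = w.count x := by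
  induction w with
  | nil => simp [scount]
  | cons z w ih => simp [scount_cons_cons, scount_nil_right, count_cons, ih]

theorem scount_cons_pair (z x y : α) (w : List α) :
    scount (z :: w) [x, y] = scount w [x, y] + if z = x then w.count y else 0 := by
  rw [scount_cons_cons, scount_singleton]

theorem scount_append_pair (u v : List α) (x y : α) :
    scount (u ++ v) [x, y] = scount u [x, y] + u.count x * v.count y + scount v [x, y] := by
  induction u with
  | nil => simp [scount]
  | cons z u ih =>
    rw [cons_append, scount_cons_pair, scount_cons_pair, ih]
    by_cases hz : z = x
    · simp only [hz, if_true, count_append, count_cons_self]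
      ring
    · simp [hz]

theorem scount_replicate_pair_of_ne (hxy : x ≠ y) (n : ℕ) (z : α) :
    scount (replicate n z) [x, y] = 0 := by
  rw [scount_eq_zero_iff]
  intro h
  have hx : x = z := eq_of_mem_replicate (h.subset (by simp))
  have hy : y = z := eq_of_mem_replicate (h.subset (by simp))
  exact hxy (hx.trans hy.symm)

theorem scount_pair_add_scount_swap (hxy : x ≠ y) (w : List α) :
    scount w [x, y] + scount w [y, x] = w.count x * w.count y := by
  induction w with
  | nil => simp [scount]
  | cons z w ih =>
    rw [scount_cons_pair, scount_cons_pair]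
    by_cases hzx : z = x
    · subst hzx
      simp only [hxy, if_true, if_false, count_cons_self, count_cons_of_ne hxy]
      linarith
    · by_cases hzy : z = y
      · subst hzy
        simp only [hzx, if_true, if_false, count_cons_self, count_cons_of_ne hzx]
        linarith
      · simpa [hzx, hzy] using ih

theorem exists_eq_replicate_append_of_count_eq_one (hw : w ⊆ [x, y]) (h : w.count x = 1) :
    ∃ m n, w = replicate m y ++ [x] ++ replicate n y := by
  obtain ⟨u, v, rfl⟩ := mem_iff_append.mp (count_pos_iff.mp (h ▸ Nat.one_pos))
  rw [count_append, count_cons_self] at h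
  have hu : x ∉ u := count_eq_zero.mp (by lia)
  have hv : x ∉ v := count_eq_zero.mp (by lia)
  obtain ⟨huxy, -, hvxy⟩ : u ⊆ [x, y] ∧ x ∈ [x, y] ∧ v ⊆ [x, y] := by
    simpa only [append_subset, cons_subset] using hw
  refine ⟨u.length, v.length, ?_⟩
  rw [← eq_replicate_of_subset_pair_of_notMem huxy hu,
    ← eq_replicate_of_subset_pair_of_notMem hvxy hv, append_assoc, singleton_append]

theorem exists_eq_replicate_append_of_scount_eq_zero (hw : w ⊆ [x, y]) (h : scount w [x, y] = 0) :
    ∃ m n, w = replicate m y ++ replicate n x := by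
  induction w with
  | nil => exact ⟨0, 0, rfl⟩
  | cons z w ih =>
    obtain ⟨hz, hw⟩ := cons_subset.mp hw
    obtain ⟨hs, hc⟩ := Nat.add_eq_zero_iff.mp (scount_cons_pair z x y w ▸ h)
    rcases mem_pair.mp hz with rfl | rfl
    · have hy : y ∉ w := count_eq_zero.mp (by simpa using hc)
      have hw' : w ⊆ [y, z] := Subset.trans hw (by simp)
      have hwz := eq_replicate_of_subset_pair_of_notMem hw' hy
      exact ⟨0, w.length + 1, by rw [replicate_succ, ← hwz]; rfl⟩
    · obtain ⟨m, n, rfl⟩ := ih hw hs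
      exact ⟨m + 1, n, rfl⟩

theorem exists_eq_replicate_append_of_scount_eq_one (hxy : x ≠ y) (hw : w ⊆ [x, y])
    (h : scount w [x, y] = 1) :
    ∃ m n, w = replicate m y ++ [x, y] ++ replicate n x := by
  induction w with
  | nil => simp [scount] at h
  | cons z w ih =>
    obtain ⟨hz, hw⟩ := cons_subset.mp hw
    rw [scount_cons_pair] at h
    rcases mem_pair.mp hz with rfl | rfl
    · rw [if_pos rfl] at h
      have hs : scount w [z, y] = 0 := by
        by_contra hs
        have hy : y ∈ w := (not_not.mp (scount_eq_zero_iff.not.mp hs)).subset (by simp)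
        have hcy : 0 < w.count y := count_pos_iff.mpr hy
        lia
      obtain ⟨m, n, rfl⟩ := exists_eq_replicate_append_of_scount_eq_zero hw hs
      obtain rfl : m = 1 := by simpa [hs, count_replicate, hxy] using h
      exact ⟨0, n, rfl⟩
    · rw [if_neg hxy.symm, add_zero] at h
      obtain ⟨m, n, rfl⟩ := ih hw h
      exact ⟨m + 1, n, rfl⟩

end Scount

section Munamb2

variable {x y : AB}

theorem subset_pair_of_ne (hxy : x ≠ y) (w : List AB) : w ⊆ [x, y] := by
  intro z _
  cases x <;> cases y <;> cases z <;> simp at hxy ⊢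

theorem meq2_iff_of_ne (hxy : x ≠ y) {w w' : List AB} :
    MEq2 w w' ↔
      w.count x = w'.count x ∧ w.count y = w'.count y ∧ scount w [x, y] = scount w' [x, y] := by
  simp only [MEq2, scount_singleton]
  have hw := scount_pair_add_scount_swap hxy w
  have hw' := scount_pair_add_scount_swap hxy w'
  cases x <;> cases y
  case a.b => rfl
  case b.a =>
    constructor <;> rintro ⟨h₁, h₂, h⟩ <;> rw [h₁, h₂] at hw <;> exact ⟨h₂, h₁, by lia⟩
  all_goals exact absurd rfl hxy

theorem munamb2_replicate_append_replicate (hxy : x ≠ y) (m n : ℕ) :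
    Munamb2 (replicate m y ++ replicate n x) := by
  intro w h
  obtain ⟨hx, hy, hs⟩ := (meq2_iff_of_ne hxy).mp h
  have hs₀ : scount w [x, y] = 0 := by
    simpa [scount_append_pair, scount_replicate_pair_of_ne hxy, count_replicate, hxy.symm] using hs
  obtain ⟨m', n', rfl⟩ :=
    exists_eq_replicate_append_of_scount_eq_zero (subset_pair_of_ne hxy w) hs₀
  obtain rfl : n' = n := by simpa [count_replicate, hxy.symm] using hx
  obtain rfl : m' = m := by simpa [count_replicate, hxy] using hy
  rfl

theorem munamb2_replicate_append_singleton_append_replicate (hxy : x ≠ y) (m n : ℕ) :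
    Munamb2 (replicate m y ++ [x] ++ replicate n y) := by
  intro w h
  obtain ⟨hx, hy, hs⟩ := (meq2_iff_of_ne hxy).mp h
  have hx₁ : w.count x = 1 := by simpa [count_replicate, hxy.symm] using hx
  obtain ⟨m', n', rfl⟩ :=
    exists_eq_replicate_append_of_count_eq_one (subset_pair_of_ne hxy w) hx₁
  obtain rfl : n' = n := by
    simpa [scount_append_pair, scount_cons_pair, scount_replicate_pair_of_ne hxy,
      count_replicate, hxy.symm] using hs
  obtain rfl : m' = m := by simpa [count_replicate, hxy] using hy
  rfl

theorem munamb2_replicate_append_pair_append_replicate (hxy : x ≠ y) (m n : ℕ) :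
    Munamb2 (replicate m y ++ [x, y] ++ replicate n x) := by
  intro w h
  obtain ⟨hx, hy, hs⟩ := (meq2_iff_of_ne hxy).mp h
  have hs₁ : scount w [x, y] = 1 := by
    simpa [scount_append_pair, scount_cons_pair, scount_replicate_pair_of_ne hxy,
      count_replicate, hxy, hxy.symm] using hs
  obtain ⟨m', n', rfl⟩ :=
    exists_eq_replicate_append_of_scount_eq_one hxy (subset_pair_of_ne hxy w) hs₁
  obtain rfl : n' = n := by simpa [count_replicate, hxy.symm] using hx
  obtain rfl : m' = m := by simpa [count_replicate, hxy] using hy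
  rfl

end Munamb2

theorem stmt_4 (α β : ℕ) (hα : 1 ≤ α) (hβ : 1 ≤ β) :
    Munamb2 [] ∧
    Munamb2 (replicate α a) ∧
    Munamb2 (replicate α b) ∧
    Munamb2 (replicate α a ++ replicate β b) ∧
    Munamb2 (replicate α b ++ replicate β a) ∧
    Munamb2 (replicate α a ++ [b] ++ replicate β a) ∧
    Munamb2 (replicate α b ++ [a] ++ replicate β b) ∧
    Munamb2 (replicate α a ++ [b, a] ++ replicate β b) ∧
    Munamb2 (replicate α b ++ [a, b] ++ replicate β a) := by
  have hab : a ≠ b := nofun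
  have hba : b ≠ a := nofun
  exact ⟨munamb2_replicate_append_replicate hab 0 0,
    munamb2_replicate_append_replicate hab 0 α,
    munamb2_replicate_append_replicate hba 0 α,
    munamb2_replicate_append_replicate hba α β,
    munamb2_replicate_append_replicate hab α β,
    munamb2_replicate_append_singleton_append_replicate hba α β,
    munamb2_replicate_append_singleton_append_replicate hab α β,
    munamb2_replicate_append_pair_append_replicate hba α β,
    munamb2_replicate_append_pair_append_replicate hab α β⟩
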